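/- arXiv:2604.06735 — 2 statements merged into one kernel-verified Lean document; each statement's English description precedes it below -/
import Mathlib

section
/- The number of ascent sequences of length n avoiding both patterns 0101 and 0121 equals the Fibonacci number F_{2n-1}, where F_1 = F_2 = 1 and F_n = F_{n-1} + F_{n-2}. -/
/-- Number of ascents of a sequence (list) of natural numbers. -/
def asc (l : List ℕ) : ℕ :=
  ((List.range (l.length - 1)).filter (fun j => l.getD j 0 < l.getD (j + 1) 0)).length

/-- `x` is an ascent sequence: nonempty, starts with 0, and each later entry is
at most one more than the number of ascents of the preceding prefix. -/
def IsAscSeq (x : List ℕ) : Prop :=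
  x ≠ [] ∧ x.getD 0 0 = 0 ∧
    ∀ i, 1 ≤ i → i < x.length → x.getD i 0 ≤ 1 + asc (x.take i)

/-- `x` contains the pattern `p`: some subsequence of `x` is order-isomorphic
(including equalities) to `p`, i.e. its reduction equals `p`. -/
def Contains (p x : List ℕ) : Prop :=
  ∃ y : List ℕ, y.Sublist x ∧ y.length = p.length ∧
    ∀ i j, i < p.length → j < p.length →
      (y.getD i 0 < y.getD j 0 ↔ p.getD i 0 < p.getD j 0)

/-- `x` avoids the pattern `p`. -/
def Avoids (p x : List ℕ) : Prop := ¬ Contains p x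

/-! Let `l` be an ascent sequence avoiding `0101` and `0121`, with `m = asc l`. Its entries are at
most `m`, and `0, 1, …, m` is a subsequence of it. Which letters `a` can be appended?

* `a = 0` and `a = m + 1` always can.
* `0 < a < m` never can, because `0, a, m, a` would be an occurrence of `0121`.
* `a = m > 0` can exactly when `l` ends in `m`: otherwise `l` ends in `0`, and `0, m, 0, m` would be
  an occurrence of `0101`.

So an avoider has three extensions if its last letter is nonzero and two if it is zero. With `Aₙ`
avoiders of length `n`, of which `Bₙ` have a nonzero last letter, `Bₙ₊₁ = Aₙ + Bₙ` and
`Aₙ₊₁ = Aₙ + Bₙ₊₁`: the sequence `B₁, A₁, B₂, A₂, …` is the Fibonacci sequence `F₀, F₁, F₂, …`.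
-/

open scoped List

theorem getLastD_mem {α : Type*} {l : List α} (hl : l ≠ []) (d : α) : l.getLastD d ∈ l := by
  obtain ⟨t, e, rfl⟩ := List.eq_nil_or_concat' l |>.resolve_left hl
  simp

theorem concat_injective {α : Type*} (f : List α → α) :
    Function.Injective fun l => l ++ [f l] :=
  Function.LeftInverse.injective (g := List.dropLast) fun _ => List.dropLast_concat

theorem concat_sublist_concat {α : Type*} {p l : List α} {s a : α} :
    p ++ [s] <+ l ++ [a] ↔ p ++ [s] <+ l ∨ s = a ∧ p <+ l := by
  rw [← List.reverse_sublist, ← List.reverse_sublist (l₁ := p ++ [s]),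
    ← List.reverse_sublist (l₁ := p)]
  simp [List.sublist_cons_iff]

theorem sublist_range_of_sortedLT {l : List ℕ} {n : ℕ} (hl : l.SortedLT) (hn : ∀ v ∈ l, v < n) :
    l <+ List.range n :=
  List.sublist_of_subperm_of_sortedLE
    (List.subperm_of_subset hl.nodup fun v hv => List.mem_range.2 (hn v hv))
    hl.sortedLE (List.sortedLT_range n).sortedLE

theorem asc_concat {l : List ℕ} (hl : l ≠ []) (a : ℕ) :
    asc (l ++ [a]) = asc l + if l.getLastD 0 < a then 1 else 0 := by
  obtain ⟨t, e, rfl⟩ := List.eq_nil_or_concat' l |>.resolve_left hl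
  have earlier : (List.range t.length).filter
        (fun j => (t ++ [e] ++ [a]).getD j 0 < (t ++ [e] ++ [a]).getD (j + 1) 0) =
      (List.range t.length).filter (fun j => (t ++ [e]).getD j 0 < (t ++ [e]).getD (j + 1) 0) := by
    refine List.filter_congr fun j hj => ?_
    have hj : j < t.length := List.mem_range.1 hj
    rw [List.getD_append _ _ _ j (by grind),
      List.getD_append _ _ _ (j + 1) (by simpa using hj)]
  have new : (t ++ [e] ++ [a]).getD t.length 0 = e ∧
      (t ++ [e] ++ [a]).getD (t.length + 1) 0 = a := by
    simp [List.getD_eq_getElem?_getD]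
  simp only [asc, List.length_append, List.length_singleton, Nat.add_sub_cancel, List.range_succ,
    List.filter_append, earlier, List.filter_singleton, new, List.getLastD_concat]
  by_cases h : e < a <;> simp [h]

theorem isAscSeq_singleton {a : ℕ} : IsAscSeq [a] ↔ a = 0 := by
  refine ⟨fun h => h.2.1, fun h => ⟨List.cons_ne_nil _ _, h, fun i h₁ h₂ => ?_⟩⟩
  rw [List.length_singleton] at h₂
  omega

theorem isAscSeq_concat {l : List ℕ} (hl : l ≠ []) {a : ℕ} :
    IsAscSeq (l ++ [a]) ↔ IsAscSeq l ∧ a ≤ asc l + 1 := by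
  have hpos : 0 < l.length := List.length_pos_iff.2 hl
  have bounds : (∀ i, 1 ≤ i → i < (l ++ [a]).length →
        (l ++ [a]).getD i 0 ≤ 1 + asc ((l ++ [a]).take i)) ↔
      (∀ i, 1 ≤ i → i < l.length → l.getD i 0 ≤ 1 + asc (l.take i)) ∧ a ≤ asc l + 1 := by
    have old : ∀ i < l.length, (l ++ [a]).getD i 0 = l.getD i 0 ∧
        (l ++ [a]).take i = l.take i := fun i hi =>
      ⟨List.getD_append _ _ _ i hi, List.take_append_of_le_length hi.le⟩
    have new : (l ++ [a]).getD l.length 0 = a ∧ (l ++ [a]).take l.length = l := by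
      simp [List.getD_eq_getElem?_getD]
    rw [List.length_append, List.length_singleton]
    refine ⟨fun h => ⟨fun i h₁ h₂ => ?_, ?_⟩, fun ⟨h, ha⟩ i h₁ h₂ => ?_⟩
    · simpa only [old i h₂] using h i h₁ (by omega)
    · simpa only [new, add_comm 1] using h l.length hpos (by omega)
    · rcases Nat.lt_succ_iff_lt_or_eq.1 h₂ with hi | rfl
      · simpa only [old i hi] using h i h₁ hi
      · simpa only [new, add_comm 1] using ha
  simp only [IsAscSeq, bounds, List.getD_append _ _ _ 0 hpos, ne_eq, hl, List.append_eq_nil_iff,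
    false_and, not_false_eq_true, true_and, and_assoc]

theorem IsAscSeq.le_asc {l : List ℕ} (h : IsAscSeq l) : ∀ v ∈ l, v ≤ asc l := by
  induction l using List.reverseRecOn with
  | nil => simp
  | append_singleton l a ih =>
    rcases eq_or_ne l [] with rfl | hl
    · simp [isAscSeq_singleton.1 h]
    obtain ⟨hseq, ha⟩ := (isAscSeq_concat hl).1 h
    have hlast : l.getLastD 0 ≤ asc l := ih hseq _ (getLastD_mem hl 0)
    intro v hv
    rw [asc_concat hl]
    rcases List.mem_append.1 hv with hv | hv
    · exact (ih hseq v hv).trans (Nat.le_add_right _ _)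
    · rw [List.mem_singleton.1 hv]
      split_ifs <;> omega

theorem avoids_0101_iff {x : List ℕ} :
    Avoids [0, 1, 0, 1] x ↔ ∀ a b, a < b → ¬ [a, b, a, b] <+ x := by
  refine ⟨fun h a b hab hs => h ⟨_, hs, rfl, fun i j hi hj => ?_⟩, ?_⟩
  · simp only [List.length_cons, List.length_nil] at hi hj
    interval_cases i <;> interval_cases j <;> simp <;> omega
  · rintro h ⟨y, hs, hlen, hord⟩
    obtain ⟨p, q, r, s, rfl⟩ := List.length_eq_four.1 hlen
    have hpq : p < q := by simpa using hord 0 1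
    have hpr : p = r := le_antisymm (by simpa using hord 2 0) (by simpa using hord 0 2)
    have hqs : q = s := le_antisymm (by simpa using hord 3 1) (by simpa using hord 1 3)
    exact h p q hpq (by rwa [← hpr, ← hqs] at hs)

theorem avoids_0121_iff {x : List ℕ} :
    Avoids [0, 1, 2, 1] x ↔ ∀ a b c, a < b → b < c → ¬ [a, b, c, b] <+ x := by
  refine ⟨fun h a b c hab hbc hs => h ⟨_, hs, rfl, fun i j hi hj => ?_⟩, ?_⟩
  · simp only [List.length_cons, List.length_nil] at hi hj
    interval_cases i <;> interval_cases j <;> simp <;> omega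
  · rintro h ⟨y, hs, hlen, hord⟩
    obtain ⟨p, q, r, s, rfl⟩ := List.length_eq_four.1 hlen
    have hpq : p < q := by simpa using hord 0 1
    have hqr : q < r := by simpa using hord 1 2
    have hqs : q = s := le_antisymm (by simpa using hord 3 1) (by simpa using hord 1 3)
    exact h p q r hpq hqr (by rwa [← hqs] at hs)

theorem avoids_0101_concat {l : List ℕ} {a : ℕ} :
    Avoids [0, 1, 0, 1] (l ++ [a]) ↔
      Avoids [0, 1, 0, 1] l ∧ ∀ w < a, ¬ [w, a, w] <+ l := by
  have sublist_iff (p q : ℕ) :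
      [p, q, p, q] <+ l ++ [a] ↔ [p, q, p, q] <+ l ∨ q = a ∧ [p, q, p] <+ l :=
    concat_sublist_concat (p := [p, q, p])
  simp only [avoids_0101_iff, sublist_iff]
  grind

theorem avoids_0121_concat {l : List ℕ} {a : ℕ} :
    Avoids [0, 1, 2, 1] (l ++ [a]) ↔
      Avoids [0, 1, 2, 1] l ∧ ∀ w c, w < a → a < c → ¬ [w, a, c] <+ l := by
  have sublist_iff (p q r : ℕ) :
      [p, q, r, q] <+ l ++ [a] ↔ [p, q, r, q] <+ l ∨ q = a ∧ [p, q, r] <+ l :=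
    concat_sublist_concat (p := [p, q, r])
  simp only [avoids_0121_iff, sublist_iff]
  grind

/-- An avoider is an ascent sequence that avoids both `0101` and `0121`. -/
def IsAvoider (x : List ℕ) : Prop :=
  IsAscSeq x ∧ Avoids [0, 1, 0, 1] x ∧ Avoids [0, 1, 2, 1] x

theorem isAvoider_singleton {a : ℕ} : IsAvoider [a] ↔ a = 0 := by
  refine ⟨fun h => isAscSeq_singleton.1 h.1, fun h => ⟨isAscSeq_singleton.2 h, ?_, ?_⟩⟩
  · exact avoids_0101_iff.2 fun _ _ _ hs => by simpa using hs.length_le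
  · exact avoids_0121_iff.2 fun _ _ _ _ _ hs => by simpa using hs.length_le

theorem isAvoider_concat {l : List ℕ} (hl : l ≠ []) {a : ℕ} :
    IsAvoider (l ++ [a]) ↔ IsAvoider l ∧ a ≤ asc l + 1 ∧ (∀ w < a, ¬ [w, a, w] <+ l) ∧
      ∀ w c, w < a → a < c → ¬ [w, a, c] <+ l := by
  rw [IsAvoider, IsAvoider, isAscSeq_concat hl, avoids_0101_concat, avoids_0121_concat]
  tauto

theorem IsAvoider.ne_nil {l : List ℕ} (h : IsAvoider l) : l ≠ [] := h.1.1

theorem IsAvoider.concat_zero {l : List ℕ} (h : IsAvoider l) : IsAvoider (l ++ [0]) :=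
  (isAvoider_concat h.ne_nil).2 ⟨h, Nat.zero_le _, by simp, by simp⟩

theorem IsAvoider.concat_asc_succ {l : List ℕ} (h : IsAvoider l) :
    IsAvoider (l ++ [asc l + 1]) := by
  have hnew : asc l + 1 ∉ l := fun hmem => absurd (h.1.le_asc _ hmem) (by omega)
  exact (isAvoider_concat h.ne_nil).2 ⟨h, le_rfl, fun w _ hs => hnew (hs.subset (by simp)),
    fun w c _ _ hs => hnew (hs.subset (by simp))⟩

theorem IsAvoider.concat_asc {l : List ℕ} (h : IsAvoider l) (hlast : l.getLastD 0 = asc l) :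
    IsAvoider (l ++ [asc l]) := by
  refine (isAvoider_concat h.ne_nil).2 ⟨h, Nat.le_succ _, fun w hw hs => ?_, fun w c _ hc hs => ?_⟩
  · obtain ⟨t, e, rfl⟩ := List.eq_nil_or_concat' l |>.resolve_left h.ne_nil
    rw [List.getLastD_concat] at hlast
    rw [← hlast] at hs hw
    have hs : [w, e, w] <+ t :=
      (concat_sublist_concat (p := [w, e]).1 hs).resolve_right fun h => hw.ne h.1
    exact avoids_0101_iff.1 h.2.1 w e hw (hs.append (List.Sublist.refl [e]))
  · exact hc.not_ge (h.1.le_asc c (hs.subset (by simp)))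

/-- A sequence is a staircase if it climbs through the values `0, 1, …, asc l` in this order and
its last letter is either the top value `asc l` or a `0` placed after that climb. -/
structure IsStaircase (l : List ℕ) : Prop where
  range_sublist : List.range (asc l + 1) <+ l
  last : l.getLastD 0 = asc l ∨ l.getLastD 0 = 0 ∧ List.range (asc l + 1) ++ [0] <+ l

theorem IsStaircase.eq_of_isAvoider_concat {l : List ℕ} (hl : IsStaircase l) {a : ℕ}
    (h : IsAvoider (l ++ [a])) :
    a = 0 ∨ a = asc l + 1 ∨ a = asc l ∧ l.getLastD 0 = asc l := by
  have hne : l ≠ [] := by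
    rintro rfl
    simpa using hl.range_sublist.length_le
  obtain ⟨-, hle, h0101, h0121⟩ := (isAvoider_concat hne).1 h
  rcases Nat.eq_zero_or_pos a with rfl | hpos
  · exact .inl rfl
  rcases lt_trichotomy a (asc l) with hlt | rfl | hgt
  · have hclimb : [0, a, asc l] <+ List.range (asc l + 1) :=
      sublist_range_of_sortedLT (by grind) (by grind)
    exact absurd (hclimb.trans hl.range_sublist) (h0121 0 _ hpos hlt)
  · refine .inr (.inr ⟨rfl, hl.last.resolve_right fun ⟨_, hreturn⟩ => h0101 0 hpos ?_⟩)
    have hclimb : [0, asc l] <+ List.range (asc l + 1) :=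
      sublist_range_of_sortedLT (by grind) (by grind)
    exact (hclimb.append (List.Sublist.refl [0])).trans hreturn
  · exact .inr (.inl (by omega))

theorem IsAvoider.isStaircase {l : List ℕ} (h : IsAvoider l) : IsStaircase l := by
  induction l using List.reverseRecOn with
  | nil => exact absurd rfl h.ne_nil
  | append_singleton l a ih =>
    rcases eq_or_ne l [] with rfl | hl
    · rw [List.nil_append] at h ⊢
      rw [isAvoider_singleton.1 h]
      exact ⟨List.Sublist.refl _, .inl rfl⟩
    have hav : IsAvoider l := ((isAvoider_concat hl).1 h).1
    have hstair : IsStaircase l := ih hav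
    have hasc := asc_concat hl a
    have hlast : l.getLastD 0 ≤ asc l := hav.1.le_asc _ (getLastD_mem hl 0)
    rcases hstair.eq_of_isAvoider_concat h with rfl | rfl | ⟨rfl, htop⟩
    · rw [if_neg (Nat.not_lt_zero _), add_zero] at hasc
      refine ⟨?_, .inr ⟨List.getLastD_concat, ?_⟩⟩ <;> rw [hasc]
      · exact hstair.range_sublist.trans (List.sublist_append_left _ _)
      · exact hstair.range_sublist.append (List.Sublist.refl _)
    · rw [if_pos (Nat.lt_succ_of_le hlast)] at hasc
      refine ⟨?_, .inl (by rw [hasc, List.getLastD_concat])⟩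
      rw [hasc, List.range_succ]
      exact hstair.range_sublist.append (List.Sublist.refl _)
    · rw [if_neg htop.not_lt, add_zero] at hasc
      refine ⟨?_, .inl (by rw [hasc, List.getLastD_concat])⟩
      rw [hasc]
      exact hstair.range_sublist.trans (List.sublist_append_left _ _)

theorem IsAvoider.concat_iff {l : List ℕ} (h : IsAvoider l) {a : ℕ} :
    IsAvoider (l ++ [a]) ↔ a = 0 ∨ a = asc l + 1 ∨ a = asc l ∧ l.getLastD 0 ≠ 0 := by
  have hlast := h.isStaircase.last
  constructor
  · intro ha
    have := h.isStaircase.eq_of_isAvoider_concat ha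
    omega
  · rintro (rfl | rfl | ⟨rfl, hne⟩)
    · exact h.concat_zero
    · exact h.concat_asc_succ
    · exact h.concat_asc (hlast.resolve_right fun h0 => hne h0.1)

/-- The avoiders of length `n`. -/
def avoiders (n : ℕ) : Set (List ℕ) := {x | x.length = n ∧ IsAvoider x}

/-- The avoiders of length `n` whose last letter is nonzero. -/
def nonzeroEndAvoiders (n : ℕ) : Set (List ℕ) := {x ∈ avoiders n | x.getLastD 0 ≠ 0}

theorem avoiders_one : avoiders 1 = {[0]} := by
  ext x
  constructor
  · rintro ⟨hlen, hx⟩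
    obtain ⟨a, rfl⟩ := List.length_eq_one_iff.1 hlen
    rw [isAvoider_singleton.1 hx, Set.mem_singleton_iff]
  · rintro rfl
    exact ⟨rfl, isAvoider_singleton.2 rfl⟩

theorem concat_mem_avoiders_succ {n : ℕ} (hn : n ≠ 0) {l : List ℕ} {a : ℕ} :
    l ++ [a] ∈ avoiders (n + 1) ↔
      l ∈ avoiders n ∧ (a = 0 ∨ a = asc l + 1 ∨ a = asc l ∧ l.getLastD 0 ≠ 0) := by
  simp only [avoiders, Set.mem_ofPred_eq, List.length_append, List.length_singleton,
    Nat.add_right_cancel_iff, and_assoc]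
  refine and_congr_right fun hlen => ?_
  have hl : l ≠ [] := by
    rintro rfl
    exact hn hlen.symm
  refine ⟨fun h => ?_, fun ⟨hl, ha⟩ => hl.concat_iff.2 ha⟩
  have hav : IsAvoider l := ((isAvoider_concat hl).1 h).1
  exact ⟨hav, hav.concat_iff.1 h⟩

theorem concat_mem_nonzeroEndAvoiders_succ {n : ℕ} (hn : n ≠ 0) {l : List ℕ} {a : ℕ} :
    l ++ [a] ∈ nonzeroEndAvoiders (n + 1) ↔
      l ∈ avoiders n ∧ a = asc l + 1 ∨ l ∈ nonzeroEndAvoiders n ∧ a = asc l := by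
  have hpos (hl : l ∈ avoiders n) (hlast : l.getLastD 0 ≠ 0) : asc l ≠ 0 := by
    have := hl.2.1.le_asc _ (getLastD_mem hl.2.ne_nil 0)
    omega
  simp only [nonzeroEndAvoiders, Set.mem_sep_iff, concat_mem_avoiders_succ hn,
    List.getLastD_concat]
  constructor
  · rintro ⟨⟨hl, rfl | rfl | ⟨rfl, hlast⟩⟩, hne⟩
    · exact absurd rfl hne
    · exact .inl ⟨hl, rfl⟩
    · exact .inr ⟨⟨hl, hlast⟩, rfl⟩
  · rintro (⟨hl, rfl⟩ | ⟨⟨hl, hlast⟩, rfl⟩)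
    · exact ⟨⟨hl, .inr (.inl rfl)⟩, Nat.succ_ne_zero _⟩
    · exact ⟨⟨hl, .inr (.inr ⟨rfl, hlast⟩)⟩, hpos hl hlast⟩

theorem avoiders_succ {n : ℕ} (hn : n ≠ 0) :
    avoiders (n + 1) = (fun l => l ++ [0]) '' avoiders n ∪ nonzeroEndAvoiders (n + 1) := by
  refine Set.Subset.antisymm (fun x hx => ?_) (Set.union_subset ?_ (Set.sep_subset _ _))
  · obtain ⟨l, a, rfl⟩ := List.eq_nil_or_concat' x |>.resolve_left hx.2.ne_nil
    rcases eq_or_ne a 0 with rfl | ha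
    · exact .inl ⟨l, ((concat_mem_avoiders_succ hn).1 hx).1, rfl⟩
    · exact .inr ⟨hx, by rwa [List.getLastD_concat]⟩
  · rintro _ ⟨l, hl, rfl⟩
    exact (concat_mem_avoiders_succ hn).2 ⟨hl, .inl rfl⟩

theorem nonzeroEndAvoiders_succ {n : ℕ} (hn : n ≠ 0) :
    nonzeroEndAvoiders (n + 1) =
      (fun l => l ++ [asc l + 1]) '' avoiders n ∪
        (fun l => l ++ [asc l]) '' nonzeroEndAvoiders n := by
  refine Set.Subset.antisymm (fun x hx => ?_) (Set.union_subset ?_ ?_)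
  · obtain ⟨l, a, rfl⟩ := List.eq_nil_or_concat' x |>.resolve_left hx.1.2.ne_nil
    rcases (concat_mem_nonzeroEndAvoiders_succ hn).1 hx with ⟨hl, rfl⟩ | ⟨hl, rfl⟩
    · exact .inl ⟨l, hl, rfl⟩
    · exact .inr ⟨l, hl, rfl⟩
  · rintro _ ⟨l, hl, rfl⟩
    exact (concat_mem_nonzeroEndAvoiders_succ hn).2 (.inl ⟨hl, rfl⟩)
  · rintro _ ⟨l, hl, rfl⟩
    exact (concat_mem_nonzeroEndAvoiders_succ hn).2 (.inr ⟨hl, rfl⟩)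

theorem encard_avoiders_succ {n : ℕ} (hn : n ≠ 0) :
    (avoiders (n + 1)).encard = (avoiders n).encard + (nonzeroEndAvoiders (n + 1)).encard := by
  have hdisj : Disjoint ((fun l => l ++ [0]) '' avoiders n) (nonzeroEndAvoiders (n + 1)) := by
    rw [Set.disjoint_left]
    rintro _ ⟨l, -, rfl⟩ ⟨-, hlast⟩
    exact hlast List.getLastD_concat
  rw [avoiders_succ hn, Set.encard_union_eq hdisj, (concat_injective fun _ => 0).encard_image]

theorem encard_nonzeroEndAvoiders_succ {n : ℕ} (hn : n ≠ 0) :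
    (nonzeroEndAvoiders (n + 1)).encard =
      (avoiders n).encard + (nonzeroEndAvoiders n).encard := by
  have hdisj : Disjoint ((fun l => l ++ [asc l + 1]) '' avoiders n)
      ((fun l => l ++ [asc l]) '' nonzeroEndAvoiders n) := by
    rw [Set.disjoint_left]
    rintro _ ⟨l, -, rfl⟩ ⟨t, -, h⟩
    obtain ⟨rfl, hletter⟩ := List.append_inj' h rfl
    simp at hletter
  rw [nonzeroEndAvoiders_succ hn, Set.encard_union_eq hdisj, (concat_injective _).encard_image,
    (concat_injective asc).encard_image]

theorem encard_avoiders_and_nonzeroEndAvoiders (n : ℕ) :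
    (avoiders (n + 1)).encard = Nat.fib (2 * n + 1) ∧
      (nonzeroEndAvoiders (n + 1)).encard = Nat.fib (2 * n) := by
  induction n with
  | zero =>
    have hempty : nonzeroEndAvoiders 1 = ∅ := by
      refine Set.eq_empty_of_forall_notMem fun x hx => hx.2 ?_
      rw [nonzeroEndAvoiders, avoiders_one] at hx
      rw [hx.1]
      rfl
    simp [avoiders_one, hempty]
  | succ n ih =>
    obtain ⟨hall, hnonzero⟩ := ih
    have hnonzero' : (nonzeroEndAvoiders (n + 2)).encard = Nat.fib (2 * n + 2) := by
      rw [encard_nonzeroEndAvoiders_succ n.succ_ne_zero, hall, hnonzero, add_comm, Nat.fib_add_two,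
        Nat.cast_add]
    have hall' : (avoiders (n + 2)).encard = Nat.fib (2 * n + 3) := by
      rw [encard_avoiders_succ n.succ_ne_zero, hall, hnonzero', Nat.fib_add_two (n := 2 * n + 1),
        Nat.cast_add]
    exact ⟨hall', hnonzero'⟩

theorem stmt_1 (n : ℕ) (hn : 1 ≤ n) :
    Nat.card {x : List ℕ // x.length = n ∧ IsAscSeq x ∧ Avoids [0, 1, 0, 1] x ∧ Avoids [0, 1, 2, 1] x} = Nat.fib (2 * n - 1) := by
  obtain ⟨m, rfl⟩ := Nat.exists_eq_add_of_le' hn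
  have hcard : (avoiders (m + 1)).ncard = Nat.fib (2 * m + 1) := by
    rw [Set.ncard_def, (encard_avoiders_and_nonzeroEndAvoiders m).1, ENat.toNat_natCast]
  exact hcard
end

section
/- For n >= 1, the number of ascent sequences of length n avoiding the three patterns 0112, 0120, and 0121 equals 2^{n-1} + C(n, 3). -/
/-!
While all entries are at most 1, neither the growth condition nor the patterns restrict a sequence,
which gives the `2 ^ (n - 1)` binary words starting with 0. The first entry exceeding 1 needs an
ascent, hence a 1, before it; by 0112 there is exactly one such 1, so this entry is 2. From then on
0120 and 0121 forbid falling below the current maximum, the growth condition allows rises by 1 only,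
and 0112 forbids a rise after a repetition. The sequence is therefore
`0 ⋯ 0 1 0 ⋯ 0 2 3 ⋯ m m ⋯ m`, which is determined by the positions `1 ≤ p < q ≤ r < n` of the 1, of
the 2 and of the first `m`: there are `n.choose 3` choices.
-/

theorem asc_eq_count (l : List ℕ) :
    asc l = Nat.count (fun j => l.getD j 0 < l.getD (j + 1) 0) (l.length - 1) :=
  List.countP_eq_length_filter.symm

theorem contains_iff_exists_orderEmbedding {p x : List ℕ} :
    Contains p x ↔ ∃ g : Fin p.length ↪o Fin x.length,
      ∀ i j, x.get (g i) < x.get (g j) ↔ p.get i < p.get j := by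
  constructor
  · rintro ⟨y, hyx, hlen, hy⟩
    obtain ⟨g, hg⟩ := List.sublist_iff_exists_fin_orderEmbedding_get_eq.1 hyx
    refine ⟨(Fin.castOrderIso hlen.symm).toOrderEmbedding.trans g, fun i j => ?_⟩
    have hval (i : Fin p.length) : x.get (g (i.cast hlen.symm)) = y.getD i 0 := by
      rw [← hg, List.getD_eq_getElem _ _ (i.2.trans_eq hlen.symm)]
      rfl
    have hy_ij := hy i j i.2 j.2
    rw [← hval, ← hval, List.getD_eq_getElem _ _ i.2, List.getD_eq_getElem _ _ j.2] at hy_ij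
    exact hy_ij
  · rintro ⟨g, hg⟩
    refine ⟨List.ofFn (x.get ∘ g), ?_, List.length_ofFn, fun i j hi hj => ?_⟩
    · refine List.sublist_iff_exists_fin_orderEmbedding_get_eq.2
        ⟨(Fin.castOrderIso List.length_ofFn).toOrderEmbedding.trans g, fun i => ?_⟩
      exact List.get_ofFn _ i
    · simpa [hi, hj] using hg ⟨i, hi⟩ ⟨j, hj⟩

theorem contains_four_iff {a b c d : ℕ} {x : List ℕ} :
    Contains [a, b, c, d] x ↔ ∃ i j k l, i < j ∧ j < k ∧ k < l ∧ l < x.length ∧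
      ∀ u v : Fin 4, ![x.getD i 0, x.getD j 0, x.getD k 0, x.getD l 0] u <
        ![x.getD i 0, x.getD j 0, x.getD k 0, x.getD l 0] v ↔
          ![a, b, c, d] u < ![a, b, c, d] v := by
  rw [contains_iff_exists_orderEmbedding]
  constructor
  · rintro ⟨g, hg⟩
    refine ⟨g 0, g 1, g 2, g 3, g.strictMono (by decide : (0 : Fin 4) < 1),
      g.strictMono (by decide : (1 : Fin 4) < 2), g.strictMono (by decide : (2 : Fin 4) < 3),
      (g 3).2, ?_⟩
    simpa [Fin.forall_fin_succ] using hg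
  · rintro ⟨i, j, k, l, hij, hjk, hkl, hl, h⟩
    have hk : k < x.length := hkl.trans hl
    have hj : j < x.length := hjk.trans hk
    have hi : i < x.length := hij.trans hj
    have hg : StrictMono (![⟨i, hi⟩, ⟨j, hj⟩, ⟨k, hk⟩, ⟨l, hl⟩] : Fin 4 → Fin x.length) := by
      simp [hij, hjk, hkl]
    refine ⟨OrderEmbedding.ofStrictMono _ hg, ?_⟩
    simpa [Fin.forall_fin_succ, hi, hj, hk, hl] using h

theorem contains_0112_iff {x : List ℕ} :
    Contains [0, 1, 1, 2] x ↔ ∃ i j k l, i < j ∧ j < k ∧ k < l ∧ l < x.length ∧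
      x.getD i 0 < x.getD j 0 ∧ x.getD j 0 = x.getD k 0 ∧ x.getD k 0 < x.getD l 0 := by
  have pattern_iff (s t u v : ℕ) : (∀ i j : Fin 4, ![s, t, u, v] i < ![s, t, u, v] j ↔
      ![0, 1, 1, 2] i < ![0, 1, 1, 2] j) ↔ s < t ∧ t = u ∧ u < v := by
    simp only [Fin.forall_fin_succ, Matrix.cons_val_zero, Matrix.cons_val_succ,
      IsEmpty.forall_iff, and_true]
    omega
  simp only [contains_four_iff, pattern_iff]

theorem contains_0120_iff {x : List ℕ} :
    Contains [0, 1, 2, 0] x ↔ ∃ i j k l, i < j ∧ j < k ∧ k < l ∧ l < x.length ∧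
      x.getD i 0 < x.getD j 0 ∧ x.getD j 0 < x.getD k 0 ∧ x.getD l 0 = x.getD i 0 := by
  have pattern_iff (s t u v : ℕ) : (∀ i j : Fin 4, ![s, t, u, v] i < ![s, t, u, v] j ↔
      ![0, 1, 2, 0] i < ![0, 1, 2, 0] j) ↔ s < t ∧ t < u ∧ v = s := by
    simp only [Fin.forall_fin_succ, Matrix.cons_val_zero, Matrix.cons_val_succ,
      IsEmpty.forall_iff, and_true]
    omega
  simp only [contains_four_iff, pattern_iff]

theorem contains_0121_iff {x : List ℕ} :
    Contains [0, 1, 2, 1] x ↔ ∃ i j k l, i < j ∧ j < k ∧ k < l ∧ l < x.length ∧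
      x.getD i 0 < x.getD j 0 ∧ x.getD j 0 < x.getD k 0 ∧ x.getD l 0 = x.getD j 0 := by
  have pattern_iff (s t u v : ℕ) : (∀ i j : Fin 4, ![s, t, u, v] i < ![s, t, u, v] j ↔
      ![0, 1, 2, 1] i < ![0, 1, 2, 1] j) ↔ s < t ∧ t < u ∧ v = t := by
    simp only [Fin.forall_fin_succ, Matrix.cons_val_zero, Matrix.cons_val_succ,
      IsEmpty.forall_iff, and_true]
    omega
  simp only [contains_four_iff, pattern_iff]

/-- The number of ascents of the finite sequence `f 0, …, f i`. -/
def ascents (f : ℕ → ℕ) (i : ℕ) : ℕ :=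
  Nat.count (fun j => f j < f (j + 1)) i

theorem ascents_succ (f : ℕ → ℕ) (i : ℕ) :
    ascents f (i + 1) = ascents f i + if f i < f (i + 1) then 1 else 0 :=
  Nat.count_succ _ i

theorem ascents_congr {f g : ℕ → ℕ} {i : ℕ} (h : ∀ j ≤ i, f j = g j) :
    ascents f i = ascents g i := by
  induction i with
  | zero => rfl
  | succ i ih =>
    rw [ascents_succ, ascents_succ, ih fun j hj => h j (by omega), h i (by omega), h (i + 1) le_rfl]

theorem asc_take_succ {x : List ℕ} {i : ℕ} (hi : i < x.length) :
    asc (x.take (i + 1)) = ascents (x.getD · 0) i := by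
  have hlen : (x.take (i + 1)).length - 1 = i := by rw [List.length_take]; omega
  rw [asc_eq_count, hlen]
  refine ascents_congr fun j hj => ?_
  simp [List.getElem?_take_of_lt (Nat.lt_succ_of_le hj)]

/-- The finite sequence `f 0, …, f (n - 1)` is an ascent sequence avoiding the patterns 0112, 0120
and 0121. Sequences are encoded as functions on `ℕ` of which only the first `n` values matter, so
that extending a sequence means increasing `n`. -/
structure IsAdmissible (f : ℕ → ℕ) (n : ℕ) : Prop where
  zero : f 0 = 0
  le_ascents : ∀ i, i + 1 < n → f (i + 1) ≤ 1 + ascents f i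
  avoids_0112 : ∀ i j k l, i < j → j < k → k < l → l < n → f i < f j → f j = f k → ¬ f k < f l
  avoids_0120 : ∀ i j k l, i < j → j < k → k < l → l < n → f i < f j → f j < f k → f l ≠ f i
  avoids_0121 : ∀ i j k l, i < j → j < k → k < l → l < n → f i < f j → f j < f k → f l ≠ f j

theorem isAscSeq_iff {x : List ℕ} (hx : x ≠ []) :
    IsAscSeq x ↔
      x.getD 0 0 = 0 ∧ ∀ i, i + 1 < x.length → x.getD (i + 1) 0 ≤ 1 + ascents (x.getD · 0) i := by
  constructor
  · rintro ⟨-, h0, h⟩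
    refine ⟨h0, fun i hi => ?_⟩
    rw [← asc_take_succ (Nat.lt_of_succ_lt hi)]
    exact h (i + 1) (Nat.succ_pos i) hi
  · rintro ⟨h0, h⟩
    refine ⟨hx, h0, fun i hi hix => ?_⟩
    obtain ⟨i, rfl⟩ := Nat.exists_eq_add_one.2 hi
    rw [asc_take_succ (Nat.lt_of_succ_lt hix)]
    exact h i hix

theorem isAdmissible_getD_iff {x : List ℕ} (hx : x ≠ []) :
    IsAdmissible (x.getD · 0) x.length ↔
      IsAscSeq x ∧ Avoids [0, 1, 1, 2] x ∧ Avoids [0, 1, 2, 0] x ∧ Avoids [0, 1, 2, 1] x := by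
  rw [isAscSeq_iff hx, Avoids, Avoids, Avoids, contains_0112_iff, contains_0120_iff,
    contains_0121_iff]
  constructor
  · rintro ⟨h0, hasc, h0112, h0120, h0121⟩
    exact ⟨⟨h0, hasc⟩,
      fun ⟨i, j, k, l, hij, hjk, hkl, hl, h₁, h₂, h₃⟩ => h0112 i j k l hij hjk hkl hl h₁ h₂ h₃,
      fun ⟨i, j, k, l, hij, hjk, hkl, hl, h₁, h₂, h₃⟩ => h0120 i j k l hij hjk hkl hl h₁ h₂ h₃,
      fun ⟨i, j, k, l, hij, hjk, hkl, hl, h₁, h₂, h₃⟩ => h0121 i j k l hij hjk hkl hl h₁ h₂ h₃⟩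
  · rintro ⟨⟨h0, hasc⟩, h0112, h0120, h0121⟩
    exact ⟨h0, hasc,
      fun i j k l hij hjk hkl hl h₁ h₂ h₃ => h0112 ⟨i, j, k, l, hij, hjk, hkl, hl, h₁, h₂, h₃⟩,
      fun i j k l hij hjk hkl hl h₁ h₂ h₃ => h0120 ⟨i, j, k, l, hij, hjk, hkl, hl, h₁, h₂, h₃⟩,
      fun i j k l hij hjk hkl hl h₁ h₂ h₃ => h0121 ⟨i, j, k, l, hij, hjk, hkl, hl, h₁, h₂, h₃⟩⟩

/-- The sequence with values in `{0, 1}` before `q`, the only `1` being at `p`, and continuing with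
`2, 3, …` from `q` up to `r`, after which it is constant. -/
def staircase (p q r i : ℕ) : ℕ :=
  if i < q then if i = p then 1 else 0 else 2 + (min i r - q)

theorem ascents_staircase {p q r : ℕ} (hp : 1 ≤ p) (hpq : p < q) (hqr : q ≤ r) (i : ℕ) :
    ascents (staircase p q r) i = if i < p then 0 else if i < q then 1 else 2 + (min i r - q) := by
  induction i with
  | zero => exact (if_pos hp).symm
  | succ i ih =>
    rw [ascents_succ, ih]
    unfold staircase
    split_ifs <;> omega

/-- The first `n` values of `f` form a 0-1 sequence starting with 0. -/
def IsBinary (f : ℕ → ℕ) (n : ℕ) : Prop :=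
  f 0 = 0 ∧ ∀ i < n, f i ≤ 1

/-- The first `n` values of `f` are those of a staircase whose parameters are less than `n`, which
makes the parameters unique. -/
def IsStaircase_s11 (f : ℕ → ℕ) (n : ℕ) : Prop :=
  ∃ p q r, 1 ≤ p ∧ p < q ∧ q ≤ r ∧ r < n ∧ ∀ i < n, f i = staircase p q r i

theorem IsBinary.isAdmissible {f : ℕ → ℕ} {n : ℕ} (h : IsBinary f n) : IsAdmissible f n := by
  obtain ⟨h0, hle⟩ := h
  refine ⟨h0, fun i hi => ?_, fun i j k l _ _ _ hl hfij hfjk => ?_,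
    fun i j k l _ _ hkl hl hfij hfjk => ?_, fun i j k l _ _ hkl hl hfij hfjk => ?_⟩
  · exact (hle _ hi).trans (Nat.le_add_right 1 _)
  · have := hle l hl
    omega
  all_goals
    have := hle k (hkl.trans hl)
    omega

theorem IsAdmissible.congr {f g : ℕ → ℕ} {n : ℕ} (hf : IsAdmissible f n) (hn : 0 < n)
    (h : ∀ i < n, f i = g i) : IsAdmissible g n := by
  refine ⟨h 0 hn ▸ hf.zero, fun i hi => ?_, fun i j k l hij hjk hkl hl => ?_,
    fun i j k l hij hjk hkl hl => ?_, fun i j k l hij hjk hkl hl => ?_⟩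
  · rw [← h _ hi, ← ascents_congr fun j hj => h j (by omega)]
    exact hf.le_ascents i hi
  all_goals rw [← h i (by omega), ← h j (by omega), ← h k (by omega), ← h l hl]
  · exact hf.avoids_0112 i j k l hij hjk hkl hl
  · exact hf.avoids_0120 i j k l hij hjk hkl hl
  · exact hf.avoids_0121 i j k l hij hjk hkl hl

theorem isAdmissible_staircase {p q r : ℕ} (hp : 1 ≤ p) (hpq : p < q) (hqr : q ≤ r) (n : ℕ) :
    IsAdmissible (staircase p q r) n := by
  have le_of_two_le {k l} (hkl : k ≤ l) (hk : 2 ≤ staircase p q r k) :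
      staircase p q r k ≤ staircase p q r l := by
    unfold staircase at *
    split_ifs at * <;> omega
  refine ⟨?_, fun i _ => ?_, fun i j k l _ hjk hkl _ hfij hfjk => ?_,
    fun i j k l _ _ hkl _ hfij hfjk => ?_, fun i j k l _ _ hkl _ hfij hfjk => ?_⟩
  · unfold staircase
    split_ifs <;> omega
  · rw [ascents_staircase hp hpq hqr]
    unfold staircase
    split_ifs <;> omega
  · unfold staircase at *
    split_ifs at * <;> omega
  all_goals
    have := le_of_two_le hkl.le (by omega)
    omega

theorem IsStaircase_s11.isAdmissible {f : ℕ → ℕ} {n : ℕ} (h : IsStaircase_s11 f n) :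
    IsAdmissible f n := by
  obtain ⟨p, q, r, hp, hpq, hqr, hr, hf⟩ := h
  exact (isAdmissible_staircase hp hpq hqr n).congr (Nat.zero_lt_of_lt hr)
    fun i hi => (hf i hi).symm

theorem IsAdmissible.mono {f : ℕ → ℕ} {m n : ℕ} (h : IsAdmissible f n) (hmn : m ≤ n) :
    IsAdmissible f m where
  zero := h.zero
  le_ascents i hi := h.le_ascents i (hi.trans_le hmn)
  avoids_0112 i j k l hij hjk hkl hl := h.avoids_0112 i j k l hij hjk hkl (hl.trans_le hmn)
  avoids_0120 i j k l hij hjk hkl hl := h.avoids_0120 i j k l hij hjk hkl (hl.trans_le hmn)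
  avoids_0121 i j k l hij hjk hkl hl := h.avoids_0121 i j k l hij hjk hkl (hl.trans_le hmn)

theorem IsAdmissible.isStaircase_of_isBinary {f : ℕ → ℕ} {n : ℕ} (h : IsAdmissible f (n + 1))
    (hbin : IsBinary f n) (hfn : 2 ≤ f n) : IsStaircase_s11 f (n + 1) := by
  obtain ⟨h0, hle⟩ := hbin
  obtain ⟨m, rfl⟩ : ∃ m, n = m + 1 := Nat.exists_eq_succ_of_ne_zero (by rintro rfl; omega)
  have hfn_le := h.le_ascents m (by omega)
  obtain ⟨j, hjm, hj⟩ : ∃ j < m, f j < f (j + 1) := Nat.count_ne_iff_exists.1 (by grind [ascents])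
  obtain ⟨p, hpm, hp1⟩ : ∃ p < m + 1, f p = 1 :=
    ⟨j + 1, by omega, by have := hle (j + 1) (by omega); omega⟩
  have hp : 1 ≤ p := Nat.one_le_iff_ne_zero.2 (by rintro rfl; omega)
  -- A second 1 would complete the pattern 0112 with the initial 0 and the final entry.
  have eq_of_one : ∀ i < m + 1, f i = 1 → i = p := by
    intro i hi hi1
    have hi0 : 0 < i := Nat.pos_of_ne_zero (by rintro rfl; omega)
    by_contra hne
    rcases lt_or_gt_of_ne hne with hip | hpi
    · exact h.avoids_0112 0 i p (m + 1) hi0 hip hpm (by omega) (by omega) (by omega) (by omega)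
    · exact h.avoids_0112 0 p i (m + 1) hp hpi hi (by omega) (by omega) (by omega) (by omega)
  have hf : ∀ i < m + 1, f i = staircase p (m + 1) (m + 1) i := by
    intro i hi
    have := hle i hi
    have := eq_of_one i hi
    grind [staircase]
  have hasc : ascents f m = 1 := by
    rw [ascents_congr fun i hi => hf i (by omega), ascents_staircase hp hpm le_rfl,
      if_neg (by omega), if_pos (by omega)]
  refine ⟨p, m + 1, m + 1, hp, hpm, le_rfl, by omega, Nat.forall_lt_succ_right.2 ⟨hf, ?_⟩⟩
  grind [staircase]

theorem IsAdmissible.isStaircase_succ {f : ℕ → ℕ} {n : ℕ} (h : IsAdmissible f (n + 1))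
    (hs : IsStaircase_s11 f n) : IsStaircase_s11 f (n + 1) := by
  obtain ⟨p, q, r, hp, hpq, hqr, hr, hf⟩ := hs
  have hfp : f p = 1 := by rw [hf p (by omega), staircase, if_pos hpq, if_pos rfl]
  have hfq : ∀ i, q ≤ i → i < n → f i = 2 + (min i r - q) := by
    intro i hi hin
    rw [hf i hin, staircase, if_neg hi.not_gt]
  have hfr := hfq r hqr hr
  have hfn_le : f n ≤ 3 + (r - q) := by
    obtain ⟨m, rfl⟩ : ∃ m, n = m + 1 := Nat.exists_eq_succ_of_ne_zero (by omega)
    have := h.le_ascents m (by omega)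
    rw [ascents_congr fun i hi => hf i (by omega), ascents_staircase hp hpq hqr] at this
    split_ifs at this <;> omega
  have ne_zero : f n ≠ 0 := by
    have := h.avoids_0120 0 p q n hp hpq (by omega) (by omega)
    grind [h.zero]
  have ne_one : f n ≠ 1 := by
    have := h.avoids_0121 0 p q n hp hpq (by omega) (by omega)
    grind [h.zero]
  -- A smaller value `≥ 2` already occurs before `r`, hence would complete the pattern 0121.
  have le_fn : 2 + (r - q) ≤ f n := by
    by_contra! hlt
    have hrep := hfq (q + (f n - 2)) (by omega) (by omega)
    have := h.avoids_0121 0 (q + (f n - 2)) r n (by omega) (by omega) hr (by omega)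
    grind [h.zero]
  obtain hflat | hrise : f n = 2 + (r - q) ∨ f n = 3 + (r - q) := by omega
  · refine ⟨p, q, r, hp, hpq, hqr, by omega, Nat.forall_lt_succ_right.2 ⟨hf, ?_⟩⟩
    grind [staircase]
  · -- A rise after a repeated value would complete the pattern 0112.
    have hrn : r + 1 = n := by
      by_contra hne
      have hlast := hfq (n - 1) (by omega) (by omega)
      have := h.avoids_0112 0 r (n - 1) n (by omega) (by omega) (by omega) (by omega)
      grind [h.zero]
    refine ⟨p, q, n, hp, hpq, by omega, by omega, Nat.forall_lt_succ_right.2 ⟨fun i hi => ?_, ?_⟩⟩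
    · rw [hf i hi]
      grind [staircase]
    · grind [staircase]

theorem IsAdmissible.isBinary_or_isStaircase {f : ℕ → ℕ} {n : ℕ} (h : IsAdmissible f n) :
    IsBinary f n ∨ IsStaircase_s11 f n := by
  induction n with
  | zero => exact Or.inl ⟨h.zero, by simp⟩
  | succ n ih =>
    rcases ih (h.mono n.le_succ) with hbin | hs
    · rcases le_or_gt (f n) 1 with hfn | hfn
      · exact Or.inl ⟨h.zero, Nat.forall_lt_succ_right.2 ⟨hbin.2, hfn⟩⟩
      · exact Or.inr (h.isStaircase_of_isBinary hbin hfn)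
    · exact Or.inr (h.isStaircase_succ hs)

theorem isAdmissible_iff {f : ℕ → ℕ} {n : ℕ} :
    IsAdmissible f n ↔ IsBinary f n ∨ IsStaircase_s11 f n :=
  ⟨IsAdmissible.isBinary_or_isStaircase,
    fun h => h.elim IsBinary.isAdmissible IsStaircase_s11.isAdmissible⟩

theorem IsBinary.not_isStaircase {f : ℕ → ℕ} {n : ℕ} (h : IsBinary f n) : ¬ IsStaircase_s11 f n := by
  rintro ⟨p, q, r, -, -, hqr, hr, hf⟩
  have hfr := h.2 r hr
  rw [hf r hr, staircase, if_neg hqr.not_gt] at hfr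
  omega

/-- The 0-1 sequence consisting of an initial 0 followed by the word `w`. -/
def binaryList {m : ℕ} (w : Fin m → Fin 2) : List ℕ :=
  0 :: List.ofFn fun i => (w i : ℕ)

theorem binaryList_injective (m : ℕ) : Function.Injective (binaryList (m := m)) := by
  intro v w hvw
  have hval := List.ofFn_injective (List.cons_injective hvw)
  exact funext fun i => Fin.ext (congrFun hval i)

theorem mem_range_binaryList_iff {m : ℕ} {x : List ℕ} :
    x ∈ Set.range (binaryList (m := m)) ↔ x.length = m + 1 ∧ IsBinary (x.getD · 0) (m + 1) := by
  constructor
  · rintro ⟨w, rfl⟩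
    refine ⟨by simp [binaryList], by simp [binaryList], fun i hi => ?_⟩
    rcases i with _ | i
    · simp [binaryList]
    · have hi : i < m := by omega
      simpa [binaryList, hi] using Nat.le_of_lt_succ (w ⟨i, hi⟩).2
  · rintro ⟨hlen, h0, hle⟩
    refine ⟨fun i => ⟨x.getD (i + 1) 0, Nat.lt_succ_of_le (hle _ (by omega))⟩,
      List.ext_getElem (by simp [binaryList, hlen]) fun i hi hix => ?_⟩
    rcases i with _ | i
    · simpa [binaryList, hix] using h0.symm
    · simp [binaryList, hix]

/-- The staircase of length `n` whose parameters are encoded by an increasing triple in `Fin n`;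
the shifts by one turn the constraints `1 ≤ p < q ≤ r < n` into `0 ≤ p - 1 < q - 1 < r < n`. -/
def staircaseList {n : ℕ} (g : Fin 3 ↪o Fin n) : List ℕ :=
  (List.range n).map (staircase (g 0 + 1) (g 1 + 1) (g 2))

theorem getD_staircaseList {n i : ℕ} (g : Fin 3 ↪o Fin n) (hi : i < n) :
    (staircaseList g).getD i 0 = staircase (g 0 + 1) (g 1 + 1) (g 2) i := by
  simp [staircaseList, hi]

theorem mem_range_staircaseList_iff {n : ℕ} {x : List ℕ} :
    x ∈ Set.range (staircaseList (n := n)) ↔ x.length = n ∧ IsStaircase_s11 (x.getD · 0) n := by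
  constructor
  · rintro ⟨g, rfl⟩
    have h01 : g 0 < g 1 := g.strictMono (by decide)
    have h12 : g 1 < g 2 := g.strictMono (by decide)
    exact ⟨by simp [staircaseList], g 0 + 1, g 1 + 1, g 2, by omega, by omega, h12, (g 2).2,
      fun i hi => getD_staircaseList g hi⟩
  · rintro ⟨hlen, p, q, r, hp, hpq, hqr, hr, hx⟩
    have hpq' : p - 1 < q - 1 := by omega
    have hqr' : q - 1 < r := by omega
    have hg : StrictMono (![⟨p - 1, by omega⟩, ⟨q - 1, by omega⟩, ⟨r, hr⟩] : Fin 3 → Fin n) := by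
      simp [hpq', hqr']
    refine ⟨OrderEmbedding.ofStrictMono _ hg, List.ext_getElem (by simp [staircaseList, hlen])
      fun i hi hix => ?_⟩
    have hxi : x[i] = staircase p q r i :=
      (List.getD_eq_getElem x 0 hix).symm.trans (hx i (hlen ▸ hix))
    simp [staircaseList, hxi, Nat.sub_add_cancel hp, Nat.sub_add_cancel (hp.trans hpq.le)]

theorem staircase_params_unique {p q r p' q' r' n : ℕ} (hpq : p < q) (hqr : q ≤ r) (hr : r < n)
    (hpq' : p' < q') (hqr' : q' ≤ r') (hr' : r' < n)
    (h : ∀ i < n, staircase p q r i = staircase p' q' r' i) : p = p' ∧ q = q' ∧ r = r' := by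
  have hp := h p (by omega)
  have hq := h q (by omega)
  have hq' := h q' (by omega)
  have hr := h r (by omega)
  have hr' := h r' (by omega)
  unfold staircase at *
  grind

theorem staircaseList_injective (n : ℕ) : Function.Injective (staircaseList (n := n)) := by
  intro g g' h
  have lt (g : Fin 3 ↪o Fin n) : (g 0 : ℕ) < g 1 ∧ (g 1 : ℕ) < g 2 :=
    ⟨g.strictMono (by decide), g.strictMono (by decide)⟩
  obtain ⟨h0, h1, h2⟩ := staircase_params_unique (Nat.succ_lt_succ (lt g).1) (lt g).2 (g 2).2
    (Nat.succ_lt_succ (lt g').1) (lt g').2 (g' 2).2 fun i hi => by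
      rw [← getD_staircaseList g hi, h, getD_staircaseList g' hi]
  refine RelEmbedding.ext fun i => Fin.ext ?_
  fin_cases i
  exacts [Nat.succ.inj h0, Nat.succ.inj h1, h2]

theorem card_orderEmbedding_fin (k n : ℕ) : Nat.card (Fin k ↪o Fin n) = n.choose k := by
  rw [Nat.card_congr Set.powersetCard.ofFinEmbEquiv, Set.powersetCard.card, Nat.card_fin]

theorem stmt_11 (n : ℕ) (hn : 1 ≤ n) :
    Nat.card {x : List ℕ // x.length = n ∧ IsAscSeq x ∧ Avoids [0, 1, 1, 2] x ∧ Avoids [0, 1, 2, 0] x ∧ Avoids [0, 1, 2, 1] x} = 2 ^ (n - 1) + Nat.choose n 3 := by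
  obtain ⟨m, rfl⟩ := Nat.exists_eq_add_one.2 hn
  have hset : {x : List ℕ | x.length = m + 1 ∧ IsAscSeq x ∧ Avoids [0, 1, 1, 2] x ∧
      Avoids [0, 1, 2, 0] x ∧ Avoids [0, 1, 2, 1] x} =
      Set.range (binaryList (m := m)) ∪ Set.range (staircaseList (n := m + 1)) := by
    ext x
    rw [Set.mem_union, mem_range_binaryList_iff, mem_range_staircaseList_iff, ← and_or_left,
      ← isAdmissible_iff]
    refine and_congr_right fun hlen => ?_
    rw [← hlen, isAdmissible_getD_iff (List.ne_nil_of_length_eq_add_one hlen)]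
  have hdisj : Disjoint (Set.range (binaryList (m := m)))
      (Set.range (staircaseList (n := m + 1))) := by
    simp only [Set.disjoint_left, mem_range_binaryList_iff, mem_range_staircaseList_iff]
    exact fun x hbin hs => hbin.2.not_isStaircase hs.2
  rw [← Set.coe_ofPred, Nat.card_coe_set_eq, hset,
    Set.ncard_union_eq hdisj (Set.finite_range _) (Set.finite_range _),
    Set.ncard_range_of_injective (binaryList_injective m),
    Set.ncard_range_of_injective (staircaseList_injective (m + 1)), card_orderEmbedding_fin]
  simp
end
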